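/- Let |M| = |W| = 3. No mechanism is interim stable: for every mechanism φ there exist a prior ψ over preference profiles and a coalition A' ⊆ M ∪ W that blocks φ in the interim at ψ. -/

import Mathlib

open scoped ENNReal

namespace Unraveling

variable (M W : Type*) [Fintype M] [DecidableEq M] [Fintype W] [DecidableEq W]

/-- A matching between men `M` and women `W`.  `Sum.inl m` denotes man `m`,
`Sum.inr w` denotes woman `w`; `toFun a = a` means agent `a` is unmatched. -/
structure Matching where
  toFun : M ⊕ W → M ⊕ W
  man_range : ∀ m : M, toFun (Sum.inl m) = Sum.inl m ∨ ∃ w : W, toFun (Sum.inl m) = Sum.inr w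
  woman_range : ∀ w : W, toFun (Sum.inr w) = Sum.inr w ∨ ∃ m : M, toFun (Sum.inr w) = Sum.inl m
  mutual_cond : ∀ (m : M) (w : W), toFun (Sum.inl m) = Sum.inr w ↔ toFun (Sum.inr w) = Sum.inl m

/-- A preference profile: each man has a ranking (a bijection onto `{1,…,|W|+1}`,
encoded as an `Equiv` onto `Fin (|W|+1)`) of the women together with the option
(`none`) of remaining unmatched, and symmetrically for women. -/
structure Profile where
  mpref : M → (Option W ≃ Fin (Fintype.card W + 1))
  wpref : W → (Option M ≃ Fin (Fintype.card M + 1))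

variable {M W}

/-- The partner of man `m` under matching `μ` (`none` if unmatched). -/
def Matching.partnerM (μ : Matching M W) (m : M) : Option W :=
  match μ.toFun (Sum.inl m) with
  | Sum.inl _ => none
  | Sum.inr w => some w

/-- The partner of woman `w` under matching `μ` (`none` if unmatched). -/
def Matching.partnerW (μ : Matching M W) (w : W) : Option M :=
  match μ.toFun (Sum.inr w) with
  | Sum.inr _ => none
  | Sum.inl m => some m

/-- The rank (`1` = most preferred) that man `m` assigns to `o` under profile `P`. -/
def mrank (P : Profile M W) (m : M) (o : Option W) : ℕ := (P.mpref m o : ℕ) + 1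

/-- The rank (`1` = most preferred) that woman `w` assigns to `o` under profile `P`. -/
def wrank (P : Profile M W) (w : W) (o : Option M) : ℕ := (P.wpref w o : ℕ) + 1

/-- The rank that agent `a` assigns to his/her partner under matching `μ`. -/
def prank (P : Profile M W) (μ : Matching M W) : M ⊕ W → ℕ
  | Sum.inl m => mrank P m (μ.partnerM m)
  | Sum.inr w => wrank P w (μ.partnerW w)

/-- The rank that agent `a` assigns to remaining unmatched. -/
def urank (P : Profile M W) : M ⊕ W → ℕ
  | Sum.inl m => mrank P m none
  | Sum.inr w => wrank P w none

/-- Stability of a matching at a profile. -/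
def IsStable (P : Profile M W) (μ : Matching M W) : Prop :=
  (∀ a : M ⊕ W, prank P μ a ≤ urank P a) ∧
  (∀ (m : M) (w : W), mrank P m (some w) < prank P μ (Sum.inl m) →
     prank P μ (Sum.inr w) < wrank P w (some m))

/-- A mechanism maps each preference profile to a probability distribution over matchings. -/
abbrev Mechanism (M W : Type*) [Fintype M] [DecidableEq M] [Fintype W] [DecidableEq W] :=
  Profile M W → PMF (Matching M W)

/-- The probability that `p` assigns to the set `s`. -/
noncomputable def prob {α : Type*} (p : PMF α) (s : Set α) : ℝ≥0∞ :=
  ∑' x, s.indicator (fun y => p y) x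

/-- CDF of the rank that agent `a` assigns to his/her random partner, when the
matching is drawn from `p` and the profile is `P`. -/
noncomputable def cdfAt (P : Profile M W) (p : PMF (Matching M W)) (a : M ⊕ W) (n : ℕ) : ℝ≥0∞ :=
  prob p {μ | prank P μ a ≤ n}

/-- `SD F G` : the rank distribution with CDF `F` strictly first-order
stochastically dominates the one with CDF `G`. -/
def SD (F G : ℕ → ℝ≥0∞) : Prop := (∀ n, G n ≤ F n) ∧ ∃ n, G n < F n

/-- A coalition consisting of at most one man and at most one woman. -/
def IsPairCoalition (A' : Set (M ⊕ W)) : Prop :=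
  {m : M | Sum.inl m ∈ A'}.Subsingleton ∧ {w : W | Sum.inr w ∈ A'}.Subsingleton

/-- Coalition `A'` blocks mechanism `φ` ex-post at profile `P`. -/
def BlocksExPost (A' : Set (M ⊕ W)) (φ : Mechanism M W) (P : Profile M W) : Prop :=
  A'.Nonempty ∧ ∃ φ' : Mechanism M W,
    (∀ a ∈ A', prob (φ' P) {μ | μ.toFun a ∈ A'} = 1) ∧
    (∀ a ∈ A', SD (cdfAt P (φ' P) a) (cdfAt P (φ P) a))

def ExPostStable (φ : Mechanism M W) : Prop :=
  ∀ (P : Profile M W) (A' : Set (M ⊕ W)), ¬ BlocksExPost A' φ P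

def ExPostPairwiseStable (φ : Mechanism M W) : Prop :=
  ∀ (P : Profile M W) (A' : Set (M ⊕ W)), IsPairCoalition A' → ¬ BlocksExPost A' φ P

/-- Ex-ante CDF of the rank of agent `a`'s partner under mechanism `φ`, when
the profile is drawn from prior `ψ`. -/
noncomputable def cdfExAnte (ψ : PMF (Profile M W)) (φ : Mechanism M W) (a : M ⊕ W) (n : ℕ) : ℝ≥0∞ :=
  ∑' P, ψ P * cdfAt P (φ P) a n

/-- Coalition `A'` blocks mechanism `φ` ex-ante at prior `ψ`. -/
def BlocksExAnte (A' : Set (M ⊕ W)) (φ : Mechanism M W) (ψ : PMF (Profile M W)) : Prop :=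
  A'.Nonempty ∧ ∃ φ' : Mechanism M W,
    (∀ a ∈ A', (∑' P, ψ P * prob (φ' P) {μ | μ.toFun a ∈ A'}) = 1) ∧
    (∀ a ∈ A', SD (cdfExAnte ψ φ' a) (cdfExAnte ψ φ a))

def ExAnteStableAt (φ : Mechanism M W) (ψ : PMF (Profile M W)) : Prop :=
  ∀ A' : Set (M ⊕ W), ¬ BlocksExAnte A' φ ψ

def ExAnteStable (φ : Mechanism M W) : Prop := ∀ ψ, ExAnteStableAt φ ψ

def ExAntePairwiseStable (φ : Mechanism M W) : Prop :=
  ∀ (ψ : PMF (Profile M W)) (A' : Set (M ⊕ W)), IsPairCoalition A' → ¬ BlocksExAnte A' φ ψ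

/-- `prefEq P P' a` : profiles `P` and `P'` give agent `a` the same preferences. -/
def prefEq (P P' : Profile M W) : M ⊕ W → Prop
  | Sum.inl m => P.mpref m = P'.mpref m
  | Sum.inr w => P.wpref w = P'.wpref w

/-- The event `Y_a(P̃_a)`: profiles in which `a`'s preferences agree with `Pt`
and every other member of the coalition `A'` has preferences in his/her
acceptance set `R`. -/
def interimEvent (A' : Set (M ⊕ W)) (R : (M ⊕ W) → Set (Profile M W)) (a : M ⊕ W)
    (Pt : Profile M W) : Set (Profile M W) :=
  {P | prefEq P Pt a ∧ ∀ a' ∈ A', a' ≠ a → P ∈ R a'}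

/-- CDF of the rank of `a`'s partner under `φ`, with the profile drawn from `ψ`
conditioned on the event `Y`. -/
noncomputable def cdfCond (ψ : PMF (Profile M W)) (Y : Set (Profile M W)) (φ : Mechanism M W)
    (a : M ⊕ W) (n : ℕ) : ℝ≥0∞ :=
  (∑' P, Y.indicator (fun P' => ψ P' * cdfAt P' (φ P') a n) P) / prob ψ Y

/-- Coalition `A'` blocks mechanism `φ` in the interim at prior `ψ`.  Each `R a`
is the set of profiles in which `a`'s preferences are ones at which `a` agrees to
deviate; it is required to depend only on `a`'s own preferences. -/
def BlocksInterim (A' : Set (M ⊕ W)) (φ : Mechanism M W) (ψ : PMF (Profile M W)) : Prop :=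
  A'.Nonempty ∧ ∃ (φ' : Mechanism M W) (R : (M ⊕ W) → Set (Profile M W)),
    (∀ (a : M ⊕ W) (P P' : Profile M W), prefEq P P' a → (P ∈ R a ↔ P' ∈ R a)) ∧
    (∀ a ∈ A', ∀ P : Profile M W, prob (φ' P) {μ | μ.toFun a ∈ A'} = 1) ∧
    (∀ a ∈ A', ∀ Pt : Profile M W,
      Pt ∈ R a ↔ (0 < prob ψ (interimEvent A' R a Pt) ∧
        SD (cdfCond ψ (interimEvent A' R a Pt) φ' a)
           (cdfCond ψ (interimEvent A' R a Pt) φ a))) ∧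
    0 < prob ψ {P | ∀ a ∈ A', P ∈ R a}

def InterimStableAt (φ : Mechanism M W) (ψ : PMF (Profile M W)) : Prop :=
  ∀ A' : Set (M ⊕ W), ¬ BlocksInterim A' φ ψ

def InterimStable (φ : Mechanism M W) : Prop := ∀ ψ, InterimStableAt φ ψ

def InterimPairwiseStable (φ : Mechanism M W) : Prop :=
  ∀ (ψ : PMF (Profile M W)) (A' : Set (M ⊕ W)), IsPairCoalition A' → ¬ BlocksInterim A' φ ψ

/-- `MRanks P m rw ru` : man `m` assigns rank `rw w` to each woman `w` and
rank `ru` to remaining unmatched. -/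
def MRanks (P : Profile M W) (m : M) (rw : W → ℕ) (ru : ℕ) : Prop :=
  (∀ w, mrank P m (some w) = rw w) ∧ mrank P m none = ru

/-- `WRanks P w rm ru` : woman `w` assigns rank `rm m` to each man `m` and
rank `ru` to remaining unmatched. -/
def WRanks (P : Profile M W) (w : W) (rm : M → ℕ) (ru : ℕ) : Prop :=
  (∀ m, wrank P w (some m) = rm m) ∧ wrank P w none = ru

instance (P : Profile M W) (m : M) (rw : W → ℕ) (ru : ℕ) : Decidable (MRanks P m rw ru) :=
  decidable_of_iff ((∀ w, mrank P m (some w) = rw w) ∧ mrank P m none = ru) Iff.rfl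

instance (P : Profile M W) (w : W) (rm : M → ℕ) (ru : ℕ) : Decidable (WRanks P w rm ru) :=
  decidable_of_iff ((∀ m, wrank P w (some m) = rm m) ∧ wrank P w none = ru) Iff.rfl

/-- The perfect matching induced by a bijection `e : M ≃ W`. -/
def matchingOf (e : M ≃ W) : Matching M W where
  toFun a :=
    match a with
    | Sum.inl m => Sum.inr (e m)
    | Sum.inr w => Sum.inl (e.symm w)
  man_range m := Or.inr ⟨e m, rfl⟩
  woman_range w := Or.inr ⟨e.symm w, rfl⟩
  mutual_cond m w := by
    constructor
    · intro h
      simp only [Sum.inr.injEq] at h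
      simp [← h]
    · intro h
      simp only [Sum.inl.injEq] at h
      simp [← h]

/-- `P'` is the permutation of profile `P` obtained by (`σM`, `σW`):
`P_a(a') = P'_{σ(a)}(σ(a'))` for all agents `a` and all `a'` in the domain of `P_a`. -/
def IsPermutedProfile (σM : Equiv.Perm M) (σW : Equiv.Perm W) (P P' : Profile M W) : Prop :=
  (∀ m w, P'.mpref (σM m) (some (σW w)) = P.mpref m (some w)) ∧
  (∀ m, P'.mpref (σM m) none = P.mpref m none) ∧
  (∀ w m, P'.wpref (σW w) (some (σM m)) = P.wpref w (some m)) ∧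
  (∀ w, P'.wpref (σW w) none = P.wpref w none)

/-- Probability (jointly over the profile drawn from `ψ` and the internal
randomization of `φ`) that agent `a` is assigned a partner of rank exactly `k`. -/
noncomputable def probRankEq (ψ : PMF (Profile M W)) (φ : Mechanism M W) (a : M ⊕ W) (k : ℕ) : ℝ≥0∞ :=
  ∑' P, ψ P * prob (φ P) {μ | prank P μ a = k}

/-- CDF of a distribution on ranks `{1,2,3}` with probabilities `q1`, `q2`, `q3`. -/
def cdf3 (q1 q2 q3 : ℝ) (n : ℕ) : ℝ :=
  (if 1 ≤ n then q1 else 0) + (if 2 ≤ n then q2 else 0) + (if 3 ≤ n then q3 else 0)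

/-- Strict first-order stochastic dominance for real-valued rank CDFs. -/
def SDR (F G : ℕ → ℝ) : Prop := (∀ n, G n ≤ F n) ∧ ∃ n, G n < F n

end Unraveling

namespace Unraveling

open Classical in
theorem prob_map_tsum {X α : Type*} (p : PMF X) (Q : X → α) (g : α → ℝ≥0∞) :
    ∑' P, (p.map Q) P * g P = ∑' x, p x * g (Q x) := by
  simp only [PMF.map_apply]
  simp_rw [← ENNReal.tsum_mul_right]
  rw [ENNReal.tsum_comm]
  congr 1
  ext x
  rw [tsum_eq_single (Q x)]
  · simp
  · intro b hb
    simp [hb]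

section general

variable {M W : Type*} [Fintype M] [DecidableEq M] [Fintype W] [DecidableEq W]

theorem prefEq_refl (P : Profile M W) (a : M ⊕ W) : prefEq P P a := by
  cases a <;> simp [prefEq]

theorem prefEq_symm {P P' : Profile M W} {a : M ⊕ W} (h : prefEq P P' a) : prefEq P' P a := by
  cases a <;> exact Eq.symm h

theorem prefEq_trans {P P' P'' : Profile M W} {a : M ⊕ W} (h : prefEq P P' a)
    (h' : prefEq P' P'' a) : prefEq P P'' a := by
  cases a <;> exact Eq.trans h h'

theorem prob_le_one {α : Type*} (p : PMF α) (s : Set α) : prob p s ≤ 1 := by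
  rw [← p.tsum_coe]
  exact ENNReal.tsum_le_tsum (fun x => Set.indicator_le_self _ _ _)

theorem prob_pos {α : Type*} (p : PMF α) (s : Set α) (x : α) (hx : x ∈ s) (h : p x ≠ 0) :
    0 < prob p s := by
  refine lt_of_lt_of_le (pos_iff_ne_zero.2 h) ?_
  refine le_trans (le_of_eq ?_) (ENNReal.le_tsum x)
  simp [hx]

theorem prob_pos_exists {α : Type*} (p : PMF α) (s : Set α) (h : 0 < prob p s) :
    ∃ x ∈ s, p x ≠ 0 := by
  by_contra! hc
  have : prob p s = 0 := by
    unfold prob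
    simp only [ENNReal.tsum_eq_zero]
    intro x
    by_cases hx : x ∈ s
    · simp [hx, hc x hx]
    · simp [hx]
  simp [this] at h

open Classical in
/-- A blocking criterion for the image of the uniform distribution. -/
theorem blocks_of {X : Type*} [Fintype X] [Nonempty X] (Q : X → Profile M W)
    (A' : Set (M ⊕ W)) (hA : A'.Nonempty) (φ φ' : Mechanism M W)
    (h1 : ∀ a ∈ A', ∀ P : Profile M W, prob (φ' P) {μ | μ.toFun a ∈ A'} = 1)
    (h2 : ∀ a ∈ A', ∀ x : X,
      SD (fun n => ∑' y, if prefEq (Q y) (Q x) a then cdfAt (Q y) (φ' (Q y)) a n else 0)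
         (fun n => ∑' y, if prefEq (Q y) (Q x) a then cdfAt (Q y) (φ (Q y)) a n else 0)) :
    BlocksInterim A' φ ((PMF.uniformOfFintype X).map Q) := by
  have hsupp : ∀ x, ((PMF.uniformOfFintype X).map Q) (Q x) ≠ 0 := by
    intro x
    rw [← PMF.mem_support_iff]
    simp [PMF.mem_support_map_iff]
  have hsupp' : ∀ P, ((PMF.uniformOfFintype X).map Q) P ≠ 0 → ∃ x, Q x = P := by
    intro P hP
    rw [← PMF.mem_support_iff] at hP
    simpa [PMF.mem_support_map_iff] using hP
  refine ⟨hA, φ', fun a => {P | ∃ x, prefEq P (Q x) a}, ?_, h1, ?_, ?_⟩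
  · intro a P P' h
    exact ⟨fun ⟨x, hx⟩ => ⟨x, prefEq_trans (prefEq_symm h) hx⟩,
      fun ⟨x, hx⟩ => ⟨x, prefEq_trans h hx⟩⟩
  · intro a ha Pt
    constructor
    · rintro ⟨x, hx⟩
      set Y := interimEvent A' (fun a => {P | ∃ x, prefEq P (Q x) a}) a Pt with hY
      have hmem : ∀ y, Q y ∈ Y ↔ prefEq (Q y) (Q x) a := by
        intro y
        constructor
        · intro h
          exact prefEq_trans h.1 hx
        · intro h
          exact ⟨prefEq_trans h (prefEq_symm hx), fun a' _ _ => ⟨y, prefEq_refl _ _⟩⟩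
      have hpos : 0 < prob ((PMF.uniformOfFintype X).map Q) Y :=
        prob_pos _ _ (Q x) ((hmem x).2 (prefEq_refl _ _)) (hsupp x)
      have hne : prob ((PMF.uniformOfFintype X).map Q) Y ≠ ⊤ :=
        ne_top_of_le_ne_top ENNReal.one_ne_top (prob_le_one _ _)
      have key : ∀ (χ : Mechanism M W) (n : ℕ),
          cdfCond ((PMF.uniformOfFintype X).map Q) Y χ a n =
          ((Fintype.card X : ℝ≥0∞)⁻¹ *
            ∑' y, if prefEq (Q y) (Q x) a then cdfAt (Q y) (χ (Q y)) a n else 0) /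
            prob ((PMF.uniformOfFintype X).map Q) Y := by
        intro χ n
        unfold cdfCond
        congr 1
        have : ∀ P, Y.indicator (fun P' => ((PMF.uniformOfFintype X).map Q) P' *
            cdfAt P' (χ P') a n) P = ((PMF.uniformOfFintype X).map Q) P *
            Y.indicator (fun P' => cdfAt P' (χ P') a n) P := by
          intro P
          by_cases hP : P ∈ Y <;> simp [hP]
        simp_rw [this]
        rw [prob_map_tsum, ← ENNReal.tsum_mul_left]
        congr 1
        ext y
        rw [PMF.uniformOfFintype_apply]
        congr 1
        by_cases hP : prefEq (Q y) (Q x) a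
        · simp [hP, (hmem y).2 hP]
        · simp [hP, mt (hmem y).1 hP]
      obtain ⟨hle, n, hlt⟩ := h2 a ha x
      refine ⟨hpos, ?_, n, ?_⟩
      · intro n
        rw [key, key]
        have := hle n
        gcongr
      · rw [key, key]
        apply ENNReal.div_lt_div_right hpos.ne' hne
        exact (ENNReal.mul_lt_mul_iff_right
          (by simp) (by simp)).2 hlt
    · rintro ⟨hpos, -⟩
      obtain ⟨P, hP, hP0⟩ := prob_pos_exists _ _ hpos
      obtain ⟨x, rfl⟩ := hsupp' P hP0
      exact ⟨x, prefEq_symm hP.1⟩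
  · obtain ⟨x⟩ := ‹Nonempty X›
    exact prob_pos _ _ (Q x) (fun a _ => ⟨x, prefEq_refl _ _⟩) (hsupp x)

open Classical in
theorem prob_pure {α : Type*} (x : α) (s : Set α) :
    prob (PMF.pure x) s = if x ∈ s then 1 else 0 := by
  unfold prob
  rw [tsum_eq_single x]
  · by_cases h : x ∈ s <;> simp [h]
  · intro b hb
    by_cases h : b ∈ s <;> simp [h, hb]

theorem prob_eq_zero {α : Type*} (p : PMF α) (s : Set α) (h : ∀ x, p x ≠ 0 → x ∉ s) :
    prob p s = 0 := by
  by_contra hc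
  obtain ⟨x, hx, hx0⟩ := prob_pos_exists p s (pos_iff_ne_zero.2 hc)
  exact h x hx0 hx

theorem prob_lt_one {α : Type*} (p : PMF α) (s : Set α) (x : α) (h : p x ≠ 0) (hx : x ∉ s) :
    prob p s < 1 := by
  rw [← p.tsum_coe]
  refine ENNReal.tsum_lt_tsum (i := x) ?_ (fun x => Set.indicator_le_self _ _ _) ?_
  · exact ne_top_of_le_ne_top ENNReal.one_ne_top (prob_le_one p s)
  · simp [hx, pos_iff_ne_zero, h]

theorem partner_iff (μ : Matching M W) (m : M) (w : W) :
    μ.partnerM m = some w ↔ μ.partnerW w = some m := by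
  have h := μ.mutual_cond m w
  unfold Matching.partnerM Matching.partnerW
  rcases h1 : μ.toFun (Sum.inl m) with a | a <;> rcases h2 : μ.toFun (Sum.inr w) with b | b <;>
    simp_all

/-- The matching that only matches `m` and `w`. -/
def pairMatching (m : M) (w : W) : Matching M W where
  toFun a := match a with
    | Sum.inl m' => if m' = m then Sum.inr w else Sum.inl m'
    | Sum.inr w' => if w' = w then Sum.inl m else Sum.inr w'
  man_range m' := by
    by_cases h : m' = m <;> simp [h]
  woman_range w' := by
    by_cases h : w' = w <;> simp [h]
  mutual_cond m' w' := by
    by_cases h : m' = m <;> by_cases h' : w' = w <;> simp [h, h', eq_comm]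
    · exact fun h1 => h' h1.symm
    · exact fun h1 => h h1.symm

/-- If no coalition ever blocks, mutual best (attainable) pairs are matched. -/
theorem forced (φ : Mechanism M W)
    (hst : ∀ (ψ : PMF (Profile M W)) (A' : Set (M ⊕ W)), ¬ BlocksInterim A' φ ψ)
    (P : Profile M W) (m : M) (w : W)
    (hm : ∀ μ, φ P μ ≠ 0 → mrank P m (some w) ≤ prank P μ (Sum.inl m))
    (hw : ∀ μ, φ P μ ≠ 0 → wrank P w (some m) ≤ prank P μ (Sum.inr w)) :
    ∀ μ, φ P μ ≠ 0 → μ.partnerM m = some w := by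
  classical
  intro μ hμ
  by_contra hne
  have hne' : μ.partnerW w ≠ some m := fun h => hne ((partner_iff μ m w).2 h)
  refine hst _ {Sum.inl m, Sum.inr w} (blocks_of (X := Unit) (fun _ => P) {Sum.inl m, Sum.inr w}
    ⟨Sum.inl m, by simp⟩ φ (fun _ => PMF.pure (pairMatching m w)) ?_ ?_)
  · rintro a (rfl | rfl) P' <;> simp [prob_pure, pairMatching]
  · rintro a ha -
    have hr : ∃ r, prank P (pairMatching m w) a = r ∧ (∀ ν, φ P ν ≠ 0 → r ≤ prank P ν a) ∧
        r < prank P μ a := by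
      rcases ha with rfl | rfl
      · refine ⟨mrank P m (some w), ?_, hm, ?_⟩
        · simp [prank, Matching.partnerM, pairMatching]
        · refine lt_of_le_of_ne (hm μ hμ) ?_
          intro h
          apply hne
          simp only [mrank, prank, add_left_inj, Fin.val_inj, EmbeddingLike.apply_eq_iff_eq] at h
          exact h.symm
      · refine ⟨wrank P w (some m), ?_, hw, ?_⟩
        · simp [prank, Matching.partnerW, pairMatching]
        · refine lt_of_le_of_ne (hw μ hμ) ?_
          intro h
          apply hne'
          simp only [wrank, prank, add_left_inj, Fin.val_inj, EmbeddingLike.apply_eq_iff_eq] at h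
          exact h.symm
    obtain ⟨r, hr1, hr2, hr3⟩ := hr
    constructor
    · intro n
      simp only [prefEq_refl, if_true, cdfAt, prob_pure, Set.mem_setOf_eq, hr1, tsum_fintype,
        Finset.univ_unique, Finset.sum_const, Finset.card_singleton, one_smul]
      split_ifs with h
      · exact prob_le_one _ _
      · refine le_of_eq (prob_eq_zero _ _ ?_)
        intro ν hν hle
        exact h ((hr2 ν hν).trans hle)
    · refine ⟨r, ?_⟩
      simp only [prefEq_refl, if_true, cdfAt, prob_pure, Set.mem_setOf_eq, hr1, tsum_fintype,
        Finset.univ_unique, Finset.sum_const, Finset.card_singleton, one_smul, le_refl]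
      exact prob_lt_one _ _ μ hμ (by simpa using hr3)

end general

/-- Preferences determined by the list of alternatives, with being unmatched last. -/
def mkPref {A : Type*} [Fintype A] (h : Fintype.card A = 3) (g : Fin 3 ≃ A) :
    Option A ≃ Fin (Fintype.card A + 1) :=
  (Equiv.optionCongr g.symm).trans ((finSuccEquivLast (n := 3)).symm.trans
    (finCongr (by rw [h])))

theorem mkPref_some {A : Type*} [Fintype A] (h : Fintype.card A = 3) (g : Fin 3 ≃ A) (a : A) :
    (mkPref h g (some a) : ℕ) = (g.symm a : ℕ) := by
  have h1 : mkPref h g (some a) = finCongr (by rw [h])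
      ((finSuccEquivLast (n := 3)).symm (some (g.symm a))) := rfl
  rw [h1]
  simp

theorem mkPref_none {A : Type*} [Fintype A] (h : Fintype.card A = 3) (g : Fin 3 ≃ A) :
    (mkPref h g none : ℕ) = 3 := by
  have h1 : mkPref h g none = finCongr (by rw [h])
      ((finSuccEquivLast (n := 3)).symm none) := rfl
  rw [h1]
  simp

theorem mkPref_inj {A : Type*} [Fintype A] (h : Fintype.card A = 3) (g g' : Fin 3 ≃ A)
    (hg : mkPref h g = mkPref h g') : g = g' := by
  apply Equiv.symm_bijective.injective
  ext a
  rw [← mkPref_some h g, hg, mkPref_some]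

/-- Ranking of the roles on the other side by role `i`. -/
def ord (i : Fin 3) : Equiv.Perm (Fin 3) := if i = 0 then Equiv.swap 1 2 else Equiv.refl _

def tr (i : Fin 3) : Equiv.Perm (Fin 3) := if i = 1 then Equiv.refl _ else Equiv.swap 1 2

def sg : Equiv.Perm (Fin 3) := Equiv.swap 0 2

theorem ord_tr : ∀ i, (ord (sg i)).trans (tr i) = ord i := by decide
theorem tr_tr : ∀ i, (tr (sg i)).trans (tr i) = Equiv.refl _ := by decide
theorem sg_sg : sg.trans sg = Equiv.refl _ := by decide
theorem sg_sg_apply : ∀ i, sg (sg i) = i := by decide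
theorem sg_symm_apply : ∀ i, sg.symm i = sg i := by decide
theorem ord_symm_self : ∀ i, (ord i).symm i = i := by decide
theorem alt_le : ∀ i, (ord (sg i)).symm i ≤ i := by decide
theorem ord_zero : ∀ i, ord i 0 = 0 := by decide
theorem ord_symm_ge : ∀ i j : Fin 3, i ≤ j → i ≤ (ord i).symm j := by decide

section main

variable {M W : Type*} [Fintype M] [DecidableEq M] [Fintype W] [DecidableEq W]

def Qp (hM : Fintype.card M = 3) (hW : Fintype.card W = 3)
    (x : (Fin 3 ≃ M) × (Fin 3 ≃ W)) : Profile M W where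
  mpref m := mkPref hW ((ord (x.1.symm m)).trans x.2)
  wpref w := mkPref hM ((ord (x.2.symm w)).trans x.1)

theorem Qp_inj (hM : Fintype.card M = 3) (hW : Fintype.card W = 3) :
    Function.Injective (Qp (M := M) (W := W) hM hW) := by
  rintro ⟨e, f⟩ ⟨e', f'⟩ h
  have h1 : ∀ m, (ord (e.symm m)).trans f = (ord (e'.symm m)).trans f' := by
    intro m
    exact mkPref_inj hW _ _ (congrFun (congrArg Profile.mpref h) m)
  have h2 : ∀ w, (ord (f.symm w)).trans e = (ord (f'.symm w)).trans e' := by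
    intro w
    exact mkPref_inj hM _ _ (congrFun (congrArg Profile.wpref h) w)
  have h3 : f 0 = f' 0 := by
    have := congrArg (fun g : Fin 3 ≃ W => g 0) (h1 (e 0))
    simpa [ord_zero] using this
  have h4 : e 0 = e' 0 := by
    have := congrArg (fun g : Fin 3 ≃ M => g 0) (h2 (f 0))
    simpa [ord_zero] using this
  have h5 : f = f' := by
    have := h1 (e 0)
    rw [Equiv.symm_apply_apply, h4, Equiv.symm_apply_apply] at this
    ext i
    have := congrArg (fun g : Fin 3 ≃ W => g ((ord 0).symm i)) this
    simpa using this
  have h6 : e = e' := by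
    have := h2 (f 0)
    rw [Equiv.symm_apply_apply, h3, Equiv.symm_apply_apply] at this
    ext i
    have := congrArg (fun g : Fin 3 ≃ M => g ((ord 0).symm i)) this
    simpa using this
  rw [h5, h6]

theorem Qp_mrank (hM : Fintype.card M = 3) (hW : Fintype.card W = 3)
    (x : (Fin 3 ≃ M) × (Fin 3 ≃ W)) (m : M) (w : W) :
    mrank (Qp hM hW x) m (some w) = ((ord (x.1.symm m)).symm (x.2.symm w) : ℕ) + 1 := by
  simp [mrank, Qp, mkPref_some]

theorem Qp_wrank (hM : Fintype.card M = 3) (hW : Fintype.card W = 3)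
    (x : (Fin 3 ≃ M) × (Fin 3 ≃ W)) (m : M) (w : W) :
    wrank (Qp hM hW x) w (some m) = ((ord (x.2.symm w)).symm (x.1.symm m) : ℕ) + 1 := by
  simp [wrank, Qp, mkPref_some]

theorem Qp_mrank_none (hM : Fintype.card M = 3) (hW : Fintype.card W = 3)
    (x : (Fin 3 ≃ M) × (Fin 3 ≃ W)) (m : M) :
    mrank (Qp hM hW x) m none = 4 := by
  simp [mrank, Qp, mkPref_none]

theorem Qp_wrank_none (hM : Fintype.card M = 3) (hW : Fintype.card W = 3)
    (x : (Fin 3 ≃ M) × (Fin 3 ≃ W)) (w : W) :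
    wrank (Qp hM hW x) w none = 4 := by
  simp [wrank, Qp, mkPref_none]

/-- In the profile `Qp x` the matching is forced role by role. -/
theorem forced_step (hM : Fintype.card M = 3) (hW : Fintype.card W = 3)
    (x : (Fin 3 ≃ M) × (Fin 3 ≃ W)) (μ : Matching M W) (i : Fin 3)
    (hlt : ∀ j < i, μ.partnerM (x.1 j) = some (x.2 j)) :
    (i : ℕ) + 1 ≤ prank (Qp hM hW x) μ (Sum.inl (x.1 i)) ∧
    (i : ℕ) + 1 ≤ prank (Qp hM hW x) μ (Sum.inr (x.2 i)) := by
  constructor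
  · simp only [prank]
    rcases hp : μ.partnerM (x.1 i) with _ | w
    · rw [Qp_mrank_none]; omega
    · rw [Qp_mrank, Equiv.symm_apply_apply]
      obtain ⟨j, rfl⟩ := x.2.surjective w
      rw [Equiv.symm_apply_apply]
      have hij : i ≤ j := by
        by_contra hc
        push Not at hc
        have h1 := (partner_iff _ _ _).1 (hlt j hc)
        have h2 := (partner_iff _ _ _).1 hp
        rw [h1] at h2
        have := x.1.injective (Option.some.inj h2)
        exact absurd this hc.ne
      have := ord_symm_ge i j hij
      have : (i : ℕ) ≤ ((ord i).symm j : ℕ) := this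
      omega
  · simp only [prank]
    rcases hp : μ.partnerW (x.2 i) with _ | w
    · rw [Qp_wrank_none]; omega
    · rw [Qp_wrank, Equiv.symm_apply_apply]
      obtain ⟨j, rfl⟩ := x.1.surjective w
      rw [Equiv.symm_apply_apply]
      have hij : i ≤ j := by
        by_contra hc
        push Not at hc
        have h1 := hlt j hc
        have h2 := (partner_iff _ _ _).2 hp
        rw [h1] at h2
        have := x.2.injective (Option.some.inj h2)
        exact absurd this hc.ne
      have := ord_symm_ge i j hij
      have : (i : ℕ) ≤ ((ord i).symm j : ℕ) := this
      omega

theorem forced_all (hM : Fintype.card M = 3) (hW : Fintype.card W = 3) (φ : Mechanism M W)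
    (hst : ∀ (ψ : PMF (Profile M W)) (A' : Set (M ⊕ W)), ¬ BlocksInterim A' φ ψ)
    (x : (Fin 3 ≃ M) × (Fin 3 ≃ W)) (i : Fin 3) :
    ∀ μ, φ (Qp hM hW x) μ ≠ 0 → μ.partnerM (x.1 i) = some (x.2 i) := by
  induction i using WellFoundedLT.induction with
  | ind i ih =>
    apply forced φ hst
    · intro μ hμ
      have := (forced_step hM hW x μ i (fun j hj => ih j hj μ hμ)).1
      rw [Qp_mrank]
      simpa [ord_symm_self] using this
    · intro μ hμ
      have := (forced_step hM hW x μ i (fun j hj => ih j hj μ hμ)).2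
      rw [Qp_wrank]
      simpa [ord_symm_self] using this

/-- Role of an agent in the profile `Qp x`. -/
def role (x : (Fin 3 ≃ M) × (Fin 3 ≃ W)) : M ⊕ W → Fin 3
  | Sum.inl m => x.1.symm m
  | Sum.inr w => x.2.symm w

def altM (x : (Fin 3 ≃ M) × (Fin 3 ≃ W)) : Matching M W :=
  matchingOf (x.1.symm.trans (sg.trans x.2))

/-- The coupling. -/
def Tf (a : M ⊕ W) (x : (Fin 3 ≃ M) × (Fin 3 ≃ W)) : (Fin 3 ≃ M) × (Fin 3 ≃ W) :=
  match a with
  | Sum.inl m => (sg.trans x.1, (tr (x.1.symm m)).trans x.2)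
  | Sum.inr w => ((tr (x.2.symm w)).trans x.1, sg.trans x.2)

theorem Tf_invol (a : M ⊕ W) : Function.Involutive (Tf (M := M) (W := W) a) := by
  rintro ⟨e, f⟩
  cases a with
  | inl m =>
    simp only [Tf, Equiv.symm_trans_apply, sg_symm_apply, ← Equiv.trans_assoc, sg_sg, tr_tr,
      Equiv.refl_trans]
  | inr w =>
    simp only [Tf, Equiv.symm_trans_apply, sg_symm_apply, ← Equiv.trans_assoc, sg_sg, tr_tr,
      Equiv.refl_trans]

theorem Tf_pref (hM : Fintype.card M = 3) (hW : Fintype.card W = 3) (a : M ⊕ W)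
    (x : (Fin 3 ≃ M) × (Fin 3 ≃ W)) :
    prefEq (Qp hM hW (Tf a x)) (Qp hM hW x) a := by
  obtain ⟨e, f⟩ := x
  cases a with
  | inl m =>
    simp only [prefEq, Qp, Tf, Equiv.symm_trans_apply, sg_symm_apply, ← Equiv.trans_assoc, ord_tr]
  | inr w =>
    simp only [prefEq, Qp, Tf, Equiv.symm_trans_apply, sg_symm_apply, ← Equiv.trans_assoc, ord_tr]

theorem Tf_rank (hM : Fintype.card M = 3) (hW : Fintype.card W = 3) (a : M ⊕ W)
    (x : (Fin 3 ≃ M) × (Fin 3 ≃ W)) :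
    prank (Qp hM hW (Tf a x)) (altM (Tf a x)) a =
      ((ord (sg (role x a))).symm (role x a) : ℕ) + 1 := by
  obtain ⟨e, f⟩ := x
  cases a with
  | inl m =>
    have : (altM (Tf (Sum.inl m) (e, f))).partnerM m =
      some (sg.trans ((tr (e.symm m)).trans f) (sg (e.symm m))) := by
      simp [altM, Tf, Matching.partnerM, matchingOf, sg_symm_apply]
    simp only [prank, this]
    rw [Qp_mrank]
    simp [Tf, role, sg_symm_apply, sg_sg_apply]
  | inr w =>
    have : (altM (Tf (Sum.inr w) (e, f))).partnerW w =
      some (sg.trans ((tr (f.symm w)).trans e) (sg (f.symm w))) := by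
      simp [altM, Tf, Matching.partnerW, matchingOf, sg_symm_apply, sg_sg_apply]
    simp only [prank, this]
    rw [Qp_wrank]
    simp [Tf, role, sg_symm_apply, sg_sg_apply]

/-- Some state with the same type has `a` in the last role. -/
theorem exists_last (hM : Fintype.card M = 3) (hW : Fintype.card W = 3) (a : M ⊕ W)
    (x : (Fin 3 ≃ M) × (Fin 3 ≃ W)) :
    ∃ y, prefEq (Qp hM hW y) (Qp hM hW x) a ∧ role y a = 2 := by
  obtain ⟨e, f⟩ := x
  have h2 : ord 2 = Equiv.refl _ := by decide
  cases a with
  | inl m =>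
    refine ⟨((Equiv.swap (e.symm m) 2).trans e, (ord (e.symm m)).trans f), ?_, ?_⟩
    · simp [prefEq, Qp, h2]
    · simp [role]
  | inr w =>
    refine ⟨((ord (f.symm w)).trans e, (Equiv.swap (f.symm w) 2).trans f), ?_, ?_⟩
    · simp [prefEq, Qp, h2]
    · simp [role]

end main

/-- With three men and three women, no mechanism is interim stable:
for every mechanism there is a prior and a coalition blocking it in the interim. -/
theorem no_mechanism_interimStable (M W : Type*)
    [Fintype M] [DecidableEq M] [Fintype W] [DecidableEq W]
    (hM : Fintype.card M = 3) (hW : Fintype.card W = 3)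
    (φ : Mechanism M W) :
    ∃ (ψ : PMF (Profile M W)) (A' : Set (M ⊕ W)), BlocksInterim A' φ ψ := by
  classical
  by_contra! hst
  have e0 : Fin 3 ≃ M := (Fintype.equivFinOfCardEq hM).symm
  have f0 : Fin 3 ≃ W := (Fintype.equivFinOfCardEq hW).symm
  haveI : Nonempty ((Fin 3 ≃ M) × (Fin 3 ≃ W)) := ⟨(e0, f0)⟩
  let φ' : Mechanism M W := fun P => PMF.pure (altM (Function.invFun (Qp hM hW) P))
  have hφ' : ∀ x, φ' (Qp hM hW x) = PMF.pure (altM x) := by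
    intro x
    simp only [φ', Function.leftInverse_invFun (Qp_inj hM hW) x]
  refine hst _ Set.univ (blocks_of (Qp hM hW) Set.univ ⟨Sum.inl (e0 0), trivial⟩ φ φ' ?_ ?_)
  · intro a _ P
    simp [φ', prob_pure]
  · intro a _ x
    have hstab : ∀ y μ, φ (Qp hM hW y) μ ≠ 0 →
        (role y a : ℕ) + 1 ≤ prank (Qp hM hW y) μ a := by
      intro y μ hμ
      have := forced_step hM hW y μ (role y a)
        (fun j _ => forced_all hM hW φ hst y j μ hμ)
      cases a with
      | inl m => simpa [role] using this.1
      | inr w => simpa [role] using this.2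
    have hre : ∀ n, (∑' y, if prefEq (Qp hM hW y) (Qp hM hW x) a then
          cdfAt (Qp hM hW y) (φ' (Qp hM hW y)) a n else 0) =
        ∑' y, if prefEq (Qp hM hW y) (Qp hM hW x) a then
          (if ((ord (sg (role y a))).symm (role y a) : ℕ) + 1 ≤ n then 1 else 0) else 0 := by
      intro n
      rw [← (Function.Involutive.toPerm _ (Tf_invol a)).tsum_eq]
      congr 1
      ext y
      simp only [Function.Involutive.coe_toPerm, hφ', cdfAt, prob_pure, Set.mem_setOf_eq, Tf_rank]
      have hiff : prefEq (Qp hM hW (Tf a y)) (Qp hM hW x) a ↔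
          prefEq (Qp hM hW y) (Qp hM hW x) a :=
        ⟨fun h => prefEq_trans (prefEq_symm (Tf_pref hM hW a y)) h,
          fun h => prefEq_trans (Tf_pref hM hW a y) h⟩
      simp only [hiff]
    have hpt : ∀ n y, (if prefEq (Qp hM hW y) (Qp hM hW x) a then
          cdfAt (Qp hM hW y) (φ (Qp hM hW y)) a n else 0) ≤
        if prefEq (Qp hM hW y) (Qp hM hW x) a then
          (if ((ord (sg (role y a))).symm (role y a) : ℕ) + 1 ≤ n then (1 : ℝ≥0∞) else 0)
          else 0 := by
      intro n y
      split_ifs with h1 h2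
      · exact prob_le_one _ _
      · refine le_of_eq (prob_eq_zero _ _ ?_)
        intro μ hμ hle
        have h3 := hstab y μ hμ
        have h4 : ((ord (sg (role y a))).symm (role y a) : ℕ) ≤ role y a := alt_le _
        have h5 : prank (Qp hM hW y) μ a ≤ n := hle
        omega
      · exact le_refl _
    constructor
    · intro n
      simp only [hre]
      exact ENNReal.tsum_le_tsum (hpt n)
    · refine ⟨2, ?_⟩
      simp only [hre]
      obtain ⟨y, hy1, hy2⟩ := exists_last hM hW a x
      refine ENNReal.tsum_lt_tsum (i := y) ?_ (hpt 2) ?_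
      · rw [tsum_fintype]
        refine (ENNReal.sum_lt_top.2 ?_).ne
        intro z _
        refine lt_of_le_of_lt (hpt 2 z) ?_
        split_ifs <;> simp
      · have h6 : ((ord (sg 2)).symm 2 : ℕ) + 1 ≤ 2 := by decide
        simp only [hy1, hy2, h6, if_true]
        refine lt_of_le_of_lt (le_of_eq (prob_eq_zero _ _ ?_)) one_pos
        intro μ hμ hle
        have h3 := hstab y μ hμ
        have h5 : prank (Qp hM hW y) μ a ≤ 2 := hle
        rw [hy2] at h3
        have : ((2 : Fin 3) : ℕ) = 2 := rfl
        omega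

end Unraveling
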